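/- Let D be a digraph on a finite vertex set V in which every vertex has at least one in-neighbor, with γ_t(D) = |V| − 1, and let s ∈ V be a vertex with out-degree 0 and in-degree at least 2 in D. Let D' be the restriction of D to V ∖ {s}. Then γ_t(D') = |V| − 1; that is, the only total dominating set of D' is the whole vertex set V ∖ {s}. -/

import Mathlib

/-- A set `S` is a total dominating set of the digraph `D` (given as its arc
relation) if every vertex has an in-neighbor belonging to `S`. -/
def TotalDomSet {V : Type} (D : V → V → Prop) (S : Set V) : Prop :=
  ∀ v : V, ∃ u ∈ S, D u v

/-- The total domination number of a digraph: the least cardinality of a total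
dominating set. -/
noncomputable def totalDomNum {V : Type} (D : V → V → Prop) : ℕ :=
  sInf {n | ∃ S : Set V, TotalDomSet D S ∧ S.ncard = n}

/-- `D` is an orientation of the simple graph `G`: every arc of `D` lies on an
edge of `G`, and every edge of `G` carries exactly one of the two possible arcs. -/
def IsOrientation {V : Type} (G : SimpleGraph V) (D : V → V → Prop) : Prop :=
  (∀ u v : V, D u v → G.Adj u v) ∧ ∀ u v : V, G.Adj u v → (D u v ↔ ¬ D v u)

/-- An orientation (digraph) is valid if every vertex has at least one in-neighbor. -/
def IsValidOrientation {V : Type} (D : V → V → Prop) : Prop :=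
  ∀ v : V, ∃ u : V, D u v

/-- The upper orientable total domination number of `G`. -/
noncomputable def DOMt {V : Type} [Fintype V] (G : SimpleGraph V) : ℕ :=
  sSup {n | ∃ D : V → V → Prop, IsOrientation G D ∧ IsValidOrientation D ∧ totalDomNum D = n}

/-- The lower orientable total domination number of `G`. -/
noncomputable def domt {V : Type} [Fintype V] (G : SimpleGraph V) : ℕ :=
  sInf {n | ∃ D : V → V → Prop, IsOrientation G D ∧ IsValidOrientation D ∧ totalDomNum D = n}

/-!
Since the sink `s` dominates nothing, a set totally dominates `D` exactly when its trace on
`V ∖ {s}` totally dominates `D'` and it contains an in-neighbor of `s`. If a total dominating set of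
`D'` missed a vertex `w`, then `V ∖ {s, w}` would dominate `D'`, and also `s`, which has an
in-neighbor other than `w`; this contradicts `γ_t(D) = |V| - 1`.
-/

section

variable {V : Type} {D : V → V → Prop} {S T : Set V} {s : V}

theorem totalDomSet_univ_iff : TotalDomSet D Set.univ ↔ ∀ v, ∃ u, D u v := by
  simp [TotalDomSet]

theorem TotalDomSet.mono (hS : TotalDomSet D S) (hST : S ⊆ T) : TotalDomSet D T := fun v =>
  let ⟨u, huS, huv⟩ := hS v
  ⟨u, hST huS, huv⟩

theorem totalDomNum_le_ncard (hS : TotalDomSet D S) : totalDomNum D ≤ S.ncard :=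
  Nat.sInf_le ⟨S, hS, rfl⟩

theorem totalDomNum_add_ncard_compl_le_card [Finite V] (hS : TotalDomSet D S) :
    totalDomNum D + Sᶜ.ncard ≤ Nat.card V := by
  rw [← Set.ncard_add_ncard_compl S]
  gcongr
  exact totalDomNum_le_ncard hS

theorem totalDomNum_eq_card_of_forall_iff_eq_univ
    (h : ∀ S, TotalDomSet D S ↔ S = Set.univ) : totalDomNum D = Nat.card V := by
  simp [totalDomNum, h, Set.ncard_univ]

theorem totalDomSet_iff_subrel_ne_of_sink (hsink : ∀ w, ¬ D s w) :
    TotalDomSet D S ↔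
      TotalDomSet (Subrel D (· ≠ s)) (Subtype.val ⁻¹' S) ∧ ∃ u ∈ S, D u s := by
  constructor
  · refine fun hS => ⟨fun v => ?_, hS s⟩
    obtain ⟨u, huS, huv⟩ := hS v
    have hus : u ≠ s := by
      rintro rfl
      exact hsink v huv
    exact ⟨⟨u, hus⟩, huS, huv⟩
  · rintro ⟨hrestrict, hs⟩ v
    obtain rfl | hvs := eq_or_ne v s
    · exact hs
    · obtain ⟨u, huS, huv⟩ := hrestrict ⟨v, hvs⟩
      exact ⟨u, huS, huv⟩

theorem TotalDomSet.compl_pair_of_subrel_ne {w : {v // v ≠ s}} (hsink : ∀ v, ¬ D s v)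
    (hin : {u | D u s}.Nontrivial) (hw : TotalDomSet (Subrel D (· ≠ s)) {w}ᶜ) :
    TotalDomSet D {s, w.1}ᶜ := by
  rw [totalDomSet_iff_subrel_ne_of_sink hsink]
  constructor
  · refine hw.mono fun v hvw => ?_
    simpa [v.2, Subtype.ext_iff] using hvw
  · obtain ⟨u, hus, huw⟩ := hin.exists_ne w.1
    have hu_ne : u ≠ s := by
      rintro rfl
      exact hsink u hus
    exact ⟨u, by simp [hu_ne, huw], hus⟩

theorem TotalDomSet.eq_univ_of_subrel_ne [Finite V] {S : Set {v // v ≠ s}}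
    (hsink : ∀ w, ¬ D s w) (hin : {u | D u s}.Nontrivial)
    (hcard : Nat.card V ≤ totalDomNum D + 1) (hS : TotalDomSet (Subrel D (· ≠ s)) S) :
    S = Set.univ := by
  by_contra hne
  obtain ⟨w, hwS⟩ := (Set.ne_univ_iff_exists_notMem S).1 hne
  have hpair : TotalDomSet D {s, w.1}ᶜ :=
    (hS.mono (Set.subset_compl_singleton_iff.2 hwS)).compl_pair_of_subrel_ne hsink hin
  have hle := totalDomNum_add_ncard_compl_le_card hpair
  rw [compl_compl, Set.ncard_pair w.2.symm] at hle
  omega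

end

/-- If `γ_t(D) = |V| - 1` and `s` has out-degree 0 and in-degree at least 2,
then the restriction `D'` of `D` to `V ∖ {s}` satisfies `γ_t(D') = |V| - 1`,
i.e. the only total dominating set of `D'` is the whole vertex set `V ∖ {s}`. -/
theorem stmt_13 {V : Type} [Fintype V] (D : V → V → Prop)
    (hvalid : ∀ v : V, ∃ u : V, D u v)
    (hγ : totalDomNum D = Fintype.card V - 1)
    (s : V) (hout : ∀ w : V, ¬ D s w) (hin : 2 ≤ {u : V | D u s}.ncard) :
    totalDomNum (fun a b : {v : V // v ≠ s} => D a.1 b.1) = Fintype.card V - 1 ∧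
      ∀ S : Set {v : V // v ≠ s},
        TotalDomSet (fun a b : {v : V // v ≠ s} => D a.1 b.1) S → S = Set.univ := by
  have hS_univ (S : Set {v : V // v ≠ s}) (hS : TotalDomSet (Subrel D (· ≠ s)) S) :
      S = Set.univ :=
    hS.eq_univ_of_subrel_ne hout (Set.one_lt_ncard_iff_nontrivial.1 hin)
      (by rw [Nat.card_eq_fintype_card]; omega)
  have huniv : TotalDomSet (Subrel D (· ≠ s)) Set.univ :=
    ((totalDomSet_iff_subrel_ne_of_sink hout).1 (totalDomSet_univ_iff.2 hvalid)).1
  have hnum : totalDomNum (Subrel D (· ≠ s)) = Nat.card {v : V // v ≠ s} :=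
    totalDomNum_eq_card_of_forall_iff_eq_univ fun S => ⟨hS_univ S, fun h => h ▸ huniv⟩
  classical
  refine ⟨hnum.trans ?_, hS_univ⟩
  simp [Fintype.card_subtype_compl]
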